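/- arXiv:1010.3393 — 5 statements merged into one kernel-verified Lean document; each statement's English description precedes it below -/
import Mathlib

section
/- Fix an integer d ≥ 2 and a real number B ≥ 1. The set of monic centred post-critically finite polynomials f(z) = z^d + a_{d−2}z^{d−2} + ⋯ + a₁z + a₀ ∈ ℚ̄[z] such that [ℚ(aᵢ):ℚ] ≤ B for every coefficient aᵢ is finite. -/
/-!
Every coefficient of a monic centred post-critically finite polynomial of degree `d = n + 1` is
bounded, in terms of `d` only, at all places of `ℚ̄`; a Northcott argument then gives finiteness.

Write `f = z^(n+1) + ∑_{i<n} α_i^(n+1-i) z^i` and let `c_1, …, c_n` be its critical points. If all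
critical values `f(c_j)` are zero, then every root of `f'` is a root of `f`, which together with
centredness forces `f = z^(n+1)`, i.e. `α = c = 0`. By the Nullstellensatz over `ℚ`, a power of each
coordinate of `(α, c)` is therefore a combination of the critical values with coefficients in
`ℚ[α, c]`, modulo the relations saying that the `c_j` are the critical points.

At any place, let `γ` be a coordinate of `(α, c)` of largest absolute value. The family is
homogeneous, so the identity may be evaluated at the rescaled point `(α, c) / γ`, whose coordinates
have absolute value at most `1`; it shows that some critical value has size at least a constant
times `|γ|^(n+1)`. If `|γ|` is too large, this critical value lies in the region where the leading
term of `f` dominates, so its orbit escapes and is infinite. Hence `|γ|` is bounded, by a uniform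
constant at the archimedean places, and such that `M γ` is integral at every valuation for one
nonzero integer `M` clearing the denominators of the identity.

An element lying in all valuation rings of `ℚ̄` is an algebraic integer, so `M^(n+1)` times each
coefficient of `f` is an algebraic integer of bounded degree with bounded conjugates, and there are
only finitely many of those.
-/

open Polynomial IsDedekindDomain
open scoped Classical

noncomputable section

/-- A fixed algebraic closure of `ℚ`. -/
abbrev Qbar : Type := AlgebraicClosure ℚ

namespace PCF

/-- `f` is a monic centred polynomial of degree `d`:
`f(z) = z^d + a_{d-2} z^{d-2} + ⋯ + a_1 z + a_0`. -/
def MonicCentred (f : Polynomial Qbar) (d : ℕ) : Prop :=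
  f.Monic ∧ f.natDegree = d ∧ f.coeff (d - 1) = 0

/-! ### Polynomials vanishing at their critical points -/

section Derivative

lemma roots_eq_roots_derivative_add_dedup {R : Type*} [CommRing R] [IsDomain R] [CharZero R]
    {f : R[X]} (hf : ∀ t, (derivative f).IsRoot t → f.IsRoot t) :
    f.roots = (derivative f).roots + f.roots.dedup := by
  ext t
  rw [Multiset.count_add, Multiset.count_dedup, count_roots, count_roots]
  by_cases ht : t ∈ f.roots
  · have hroot := (mem_roots'.1 ht).2
    have hpos := (rootMultiplicity_pos (mem_roots'.1 ht).1).2 hroot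
    rw [if_pos ht, derivative_rootMultiplicity_of_root hroot]
    omega
  · have hmult : f.rootMultiplicity t = 0 := by rwa [← count_roots, Multiset.count_eq_zero]
    rcases eq_or_ne f 0 with rfl | hf0
    · simp
    · have hroot : ¬ f.IsRoot t := fun h => ht ((mem_roots hf0).2 h)
      rw [if_neg ht, hmult, rootMultiplicity_eq_zero fun h => hroot (hf t h)]

variable {K : Type*} [Field K] [CharZero K] [IsAlgClosed K] {f : K[X]}

lemma exists_eq_X_sub_C_pow_of_isRoot_derivative (hmonic : f.Monic)
    (hf : ∀ t, (derivative f).IsRoot t → f.IsRoot t) :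
    ∃ a, f = (X - C a) ^ f.natDegree := by
  have hdeg : f.natDegree ≠ 0 := fun h => by
    rw [hmonic.natDegree_eq_zero.1 h] at hf
    simpa using hf 0
  have hcard := congrArg Multiset.card (roots_eq_roots_derivative_add_dedup hf)
  rw [Multiset.card_add, splits_iff_card_roots.1 (IsAlgClosed.splits f),
    splits_iff_card_roots.1 (IsAlgClosed.splits (derivative f)), natDegree_derivative] at hcard
  have hsep : f.natSepDegree = 1 := by
    rw [natSepDegree_eq_of_isAlgClosed K, aroots_def, Algebra.algebraMap_self, map_id,
      Multiset.card_toFinset]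
    omega
  obtain ⟨m, a, -, hfa⟩ := hmonic.eq_X_sub_C_pow_of_natSepDegree_eq_one_of_splits
    (IsAlgClosed.splits f) hsep
  refine ⟨a, ?_⟩
  nth_rw 2 [hfa]
  rwa [natDegree_pow, natDegree_X_sub_C, mul_one]

lemma eq_X_pow_of_isRoot_derivative (hmonic : f.Monic) (hcentred : f.nextCoeff = 0)
    (hf : ∀ t, (derivative f).IsRoot t → f.IsRoot t) : f = X ^ f.natDegree := by
  obtain ⟨a, ha⟩ := exists_eq_X_sub_C_pow_of_isRoot_derivative hmonic hf
  rw [ha, (monic_X_sub_C a).nextCoeff_pow, nextCoeff_X_sub_C, smul_neg, neg_eq_zero,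
    smul_eq_zero] at hcentred
  rcases hcentred with hdeg | rfl
  · rw [hdeg, pow_zero]
    exact hmonic.natDegree_eq_zero.1 hdeg
  · simpa using ha

end Derivative

/-! ### Critically marked centred polynomials -/

section Marked

variable {R S : Type*} [CommRing R] [CommRing S] {n : ℕ}

/-- The monic centred polynomial `z^(n+1) + ∑_{i<n} α_i^(n+1-i) z^i` of degree `n + 1`. Writing the
`i`-th coefficient as an `(n+1-i)`-th power makes the family homogeneous of degree `n + 1`
in `(α, z)`. -/
def centredPoly (α : Fin n → R) : R[X] :=
  X ^ (n + 1) + ∑ i : Fin n, C (α i ^ (n + 1 - (i : ℕ))) * X ^ (i : ℕ)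

/-- For a point `y = (α, c)`, the difference between the two sides of
`f' = (n + 1) ∏ (X - c_j)`, where `f = centredPoly α`. Over a field of characteristic zero it
vanishes if and only if the `c_j` are the critical points of `f`, with multiplicity. -/
def criticalRelation (y : Fin n ⊕ Fin n → R) : R[X] :=
  derivative (centredPoly (y ∘ .inl)) - C (n + 1 : R) * ∏ j, (X - C (y (.inr j)))

/-- For a point `y = (α, c)`, the value `f (c_j)`, where `f = centredPoly α`. -/
def criticalValue (y : Fin n ⊕ Fin n → R) (j : Fin n) : R :=
  (centredPoly (y ∘ .inl)).eval (y (.inr j))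

lemma coeff_centredPoly (α : Fin n → R) (k : ℕ) :
    (centredPoly α).coeff k =
      if h : k < n then α ⟨k, h⟩ ^ (n + 1 - k) else if k = n + 1 then 1 else 0 := by
  have hsum : (∑ i : Fin n, C (α i ^ (n + 1 - (i : ℕ))) * X ^ (i : ℕ)).coeff k =
      if h : k < n then α ⟨k, h⟩ ^ (n + 1 - k) else 0 := by
    simp only [finsetSum_coeff, coeff_C_mul_X_pow]
    split_ifs with h
    · rw [Finset.sum_eq_single ⟨k, h⟩ (fun i _ hi => if_neg fun hk => hi (Fin.ext hk.symm))
        (by simp)]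
      simp
    · exact Finset.sum_eq_zero fun i _ => if_neg (by omega)
  rw [centredPoly, coeff_add, coeff_X_pow, hsum]
  split_ifs <;> first | omega | simp

lemma natDegree_centredPoly [Nontrivial R] (α : Fin n → R) :
    (centredPoly α).natDegree = n + 1 := by
  refine natDegree_eq_of_le_of_coeff_ne_zero (natDegree_le_iff_coeff_eq_zero.2 fun k hk => ?_) ?_
  · rw [coeff_centredPoly, dif_neg (by omega), if_neg (by omega)]
  · simp [coeff_centredPoly]

lemma monic_centredPoly (α : Fin n → R) : (centredPoly α).Monic := by
  nontriviality R
  simp [Monic, leadingCoeff, natDegree_centredPoly, coeff_centredPoly]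

lemma nextCoeff_centredPoly (α : Fin n → R) : (centredPoly α).nextCoeff = 0 := by
  nontriviality R
  simp [nextCoeff, natDegree_centredPoly, coeff_centredPoly]

lemma eval_centredPoly (α : Fin n → R) (z : R) :
    (centredPoly α).eval z = z ^ (n + 1) + ∑ i, α i ^ (n + 1 - (i : ℕ)) * z ^ (i : ℕ) := by
  simp [centredPoly, eval_finsetSum]

lemma map_centredPoly (φ : R →+* S) (α : Fin n → R) :
    (centredPoly α).map φ = centredPoly (φ ∘ α) := by
  simp [centredPoly, Polynomial.map_sum]

lemma map_criticalRelation (φ : R →+* S) (y : Fin n ⊕ Fin n → R) :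
    (criticalRelation y).map φ = criticalRelation (φ ∘ y) := by
  simp [criticalRelation, ← derivative_map, map_centredPoly, Polynomial.map_prod,
    Function.comp_assoc]

lemma map_criticalValue (φ : R →+* S) (y : Fin n ⊕ Fin n → R) (j : Fin n) :
    φ (criticalValue y j) = criticalValue (φ ∘ y) j := by
  rw [criticalValue, ← eval_map_apply, map_centredPoly]
  rfl

lemma centredPoly_smul_comp (γ : R) (α : Fin n → R) :
    (centredPoly (γ • α)).comp (C γ * X) = C (γ ^ (n + 1)) * centredPoly α := by
  simp only [centredPoly, add_comp, pow_comp, X_comp, sum_comp, mul_comp, C_comp,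
    Pi.smul_apply, smul_eq_mul, mul_pow, mul_add, Finset.mul_sum, map_mul, map_pow]
  refine congrArg _ (Finset.sum_congr rfl fun i _ => ?_)
  rw [← pow_sub_mul_pow (C γ) (show (i : ℕ) ≤ n + 1 by omega)]
  ring

lemma criticalRelation_smul_comp (γ : R) (y : Fin n ⊕ Fin n → R) :
    C γ * (criticalRelation (γ • y)).comp (C γ * X) = C (γ ^ (n + 1)) * criticalRelation y := by
  have hderiv := congrArg derivative (centredPoly_smul_comp γ (y ∘ .inl))
  rw [derivative_comp, derivative_C_mul, derivative_C_mul, derivative_X, mul_one] at hderiv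
  have hfactor (j : Fin n) :
      (X - C ((γ • y) (.inr j))).comp (C γ * X) = C γ * (X - C (y (.inr j))) := by
    simp [mul_sub]
  have hprod : (∏ j, (X - C ((γ • y) (.inr j)))).comp (C γ * X) =
      C γ ^ n * ∏ j, (X - C (y (.inr j))) := by
    rw [prod_comp, Finset.prod_congr rfl fun j _ => hfactor j, Finset.prod_mul_distrib]
    simp
  rw [criticalRelation, criticalRelation, sub_comp, mul_comp, C_comp, hprod, mul_sub, mul_sub,
    ← hderiv, map_pow]
  change C γ * (derivative (centredPoly (γ • (y ∘ .inl)))).comp (C γ * X) - _ = _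
  ring

lemma criticalValue_smul (γ : R) (y : Fin n ⊕ Fin n → R) (j : Fin n) :
    criticalValue (γ • y) j = γ ^ (n + 1) * criticalValue y j := by
  have h := congrArg (eval (y (.inr j))) (centredPoly_smul_comp γ (y ∘ .inl))
  rwa [eval_comp, eval_mul, eval_mul, eval_C, eval_C, eval_X] at h

lemma criticalRelation_eq_zero_of_smul [IsDomain R] {γ : R} (hγ : γ ≠ 0) {y : Fin n ⊕ Fin n → R}
    (hy : criticalRelation (γ • y) = 0) : criticalRelation y = 0 := by
  have h := criticalRelation_smul_comp γ y
  rw [hy, zero_comp, mul_zero, eq_comm, mul_eq_zero, C_eq_zero] at h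
  exact h.resolve_left (pow_ne_zero _ hγ)

lemma isRoot_derivative_centredPoly [IsDomain R] [CharZero R] {y : Fin n ⊕ Fin n → R}
    (hy : criticalRelation y = 0) {t : R} :
    (derivative (centredPoly (y ∘ .inl))).IsRoot t ↔ ∃ j, t = y (.inr j) := by
  rw [sub_eq_zero.1 hy, IsRoot, eval_mul, eval_C, mul_eq_zero_iff_left n.cast_add_one_ne_zero,
    eval_prod, Finset.prod_eq_zero_iff]
  simp [sub_eq_zero]

end Marked

section Nullcone

variable {K : Type*} [Field K] [CharZero K] [IsAlgClosed K] {n : ℕ}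

lemma eq_zero_of_criticalValue_eq_zero {y : Fin n ⊕ Fin n → K} (hy : criticalRelation y = 0)
    (hval : ∀ j, criticalValue y j = 0) : y = 0 := by
  have hpow : centredPoly (y ∘ .inl) = X ^ (n + 1) := by
    rw [← natDegree_centredPoly (y ∘ .inl)]
    refine eq_X_pow_of_isRoot_derivative (monic_centredPoly _) (nextCoeff_centredPoly _)
      fun t ht => ?_
    obtain ⟨j, rfl⟩ := (isRoot_derivative_centredPoly hy).1 ht
    exact hval j
  ext (i | j)
  · have hcoeff := congrArg (coeff · i) hpow
    simp only [coeff_centredPoly, i.2, dif_pos, coeff_X_pow, if_neg (show (i : ℕ) ≠ n + 1 by omega)]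
      at hcoeff
    exact eq_zero_of_pow_eq_zero hcoeff
  · have hc := hval j
    rw [criticalValue, hpow, eval_X_pow] at hc
    exact eq_zero_of_pow_eq_zero hc

end Nullcone

/-! ### Lower bounds for the critical values -/

section Nullstellensatz

lemma exists_pow_sub_sum_mem_span_of_forall_zero {k K : Type*} {σ ι κ : Type*} [Field k] [Field K]
    [Algebra k K] [IsAlgClosed K] [Finite σ] [Fintype ι] (p : ι → MvPolynomial σ k)
    (r : κ → MvPolynomial σ k) (q : MvPolynomial σ k)
    (h : ∀ y : σ → K, (∀ i, MvPolynomial.aeval y (p i) = 0) →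
      (∀ j, MvPolynomial.aeval y (r j) = 0) → MvPolynomial.aeval y q = 0) :
    ∃ (N : ℕ) (g : ι → MvPolynomial σ k), q ^ N - ∑ i, g i * p i ∈ Ideal.span (Set.range r) := by
  have hrad : q ∈ (Ideal.span (Set.range p) ⊔ Ideal.span (Set.range r)).radical := by
    rw [← MvPolynomial.vanishingIdeal_zeroLocus_eq_radical (K := K),
      MvPolynomial.mem_vanishingIdeal_iff]
    intro y hy
    rw [MvPolynomial.mem_zeroLocus_iff] at hy
    exact h y (fun i => hy _ (Ideal.mem_sup_left (Ideal.subset_span ⟨i, rfl⟩)))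
      fun j => hy _ (Ideal.mem_sup_right (Ideal.subset_span ⟨j, rfl⟩))
  obtain ⟨N, hN⟩ := hrad
  obtain ⟨u, hu, w, hw, huw⟩ := Submodule.mem_sup.1 hN
  obtain ⟨g, rfl⟩ := Ideal.mem_span_range_iff_exists_fun.1 hu
  exact ⟨N, g, by rwa [← huw, add_sub_cancel_left]⟩

lemma aeval_eq_zero_of_mem_span_range {k L : Type*} {σ κ : Type*} [CommRing k] [CommRing L]
    [Algebra k L] {r : κ → MvPolynomial σ k} {q : MvPolynomial σ k}
    (hq : q ∈ Ideal.span (Set.range r)) {y : σ → L} (hy : ∀ j, MvPolynomial.aeval y (r j) = 0) :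
    MvPolynomial.aeval y q = 0 := by
  have hle : Ideal.span (Set.range r) ≤ RingHom.ker (MvPolynomial.aeval y) := by
    rw [Ideal.span_le]
    rintro _ ⟨j, rfl⟩
    exact hy j
  exact hle hq

end Nullstellensatz

section Identity

variable {n : ℕ} {L : Type*} [CommRing L] [Algebra ℚ L]

lemma aeval_coeff_criticalRelation_X (y : Fin n ⊕ Fin n → L) (k : ℕ) :
    MvPolynomial.aeval y ((criticalRelation (MvPolynomial.X (R := ℚ))).coeff k) =
      (criticalRelation y).coeff k := by
  have h := map_criticalRelation (MvPolynomial.aeval y).toRingHom (MvPolynomial.X (R := ℚ))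
  rw [show (MvPolynomial.aeval y).toRingHom ∘ MvPolynomial.X (R := ℚ) = y by ext; simp] at h
  rw [← h, coeff_map]
  rfl

lemma aeval_criticalValue_X (y : Fin n ⊕ Fin n → L) (j : Fin n) :
    MvPolynomial.aeval y (criticalValue (MvPolynomial.X (R := ℚ)) j) = criticalValue y j := by
  have h := map_criticalValue (MvPolynomial.aeval y).toRingHom (MvPolynomial.X (R := ℚ)) j
  rwa [show (MvPolynomial.aeval y).toRingHom ∘ MvPolynomial.X (R := ℚ) = y by ext; simp] at h

lemma exists_pow_eq_sum_criticalValue (n : ℕ) :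
    ∃ (N : Fin n ⊕ Fin n → ℕ) (g : Fin n ⊕ Fin n → Fin n → MvPolynomial (Fin n ⊕ Fin n) ℚ),
      ∀ {L : Type*} [CommRing L] [Algebra ℚ L] {y : Fin n ⊕ Fin n → L}, criticalRelation y = 0 →
        ∀ s, y s ^ N s = ∑ j, MvPolynomial.aeval y (g s j) * criticalValue y j := by
  have hnull (s : Fin n ⊕ Fin n) := exists_pow_sub_sum_mem_span_of_forall_zero
    (K := AlgebraicClosure ℚ) (criticalValue (MvPolynomial.X (R := ℚ)))
    (criticalRelation (MvPolynomial.X (R := ℚ))).coeff (MvPolynomial.X s) fun y hval hrel => by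
      simp only [aeval_criticalValue_X, aeval_coeff_criticalRelation_X] at hval hrel
      simp [eq_zero_of_criticalValue_eq_zero (Polynomial.ext hrel) hval]
  choose N g hg using hnull
  refine ⟨N, g, fun {L} _ _ y hy s => ?_⟩
  have h := aeval_eq_zero_of_mem_span_range (hg s) (y := y) fun k => by
    rw [aeval_coeff_criticalRelation_X, hy, coeff_zero]
  simpa [sub_eq_zero, aeval_criticalValue_X] using h

/-- Homogeneity of the family turns the Nullstellensatz identity at `y / y s` into one whose
coefficients are evaluated at a point that is bounded when `y s` is the largest coordinate. -/
lemma exists_pow_eq_sum_div_mul_criticalValue (n : ℕ) :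
    ∃ g : Fin n ⊕ Fin n → Fin n → MvPolynomial (Fin n ⊕ Fin n) ℚ,
      ∀ {L : Type*} [Field L] [Algebra ℚ L] {y : Fin n ⊕ Fin n → L}, criticalRelation y = 0 →
        ∀ s, y s ≠ 0 → y s ^ (n + 1) =
          ∑ j, MvPolynomial.aeval (fun t => y t / y s) (g s j) * criticalValue y j := by
  obtain ⟨N, g, hg⟩ := exists_pow_eq_sum_criticalValue n
  refine ⟨g, fun {L} _ _ y hy s hs => ?_⟩
  have hscaled : y s • (fun t => y t / y s) = y := by
    ext t
    exact mul_div_cancel₀ (y t) hs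
  have hrel : criticalRelation (fun t => y t / y s) = 0 :=
    criticalRelation_eq_zero_of_smul hs (by rwa [hscaled])
  have h := hg hrel s
  rw [div_self hs, one_pow] at h
  calc y s ^ (n + 1)
      = ∑ j, MvPolynomial.aeval (fun t => y t / y s) (g s j) *
          (y s ^ (n + 1) * criticalValue (fun t => y t / y s) j) := by
        simp_rw [mul_left_comm _ (y s ^ (n + 1)), ← Finset.mul_sum, ← h, mul_one]
    _ = _ := by simp_rw [← criticalValue_smul, hscaled]

end Identity

/-! ### Finite orbits -/

section Orbit

variable {α β : Type*}

/-- The forward orbit of `c` under `f` is finite, that is, `c` is preperiodic. -/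
def HasFiniteOrbit (f : α → α) (c : α) : Prop :=
  (Set.range fun m : ℕ => f^[m] c).Finite

lemma HasFiniteOrbit.map {f : α → α} {g : β → β} {φ : α → β} (hφ : Function.Semiconj φ f g)
    {c : α} (hc : HasFiniteOrbit f c) : HasFiniteOrbit g (φ c) := by
  refine (Set.Finite.image φ hc).subset ?_
  rintro _ ⟨m, rfl⟩
  exact ⟨f^[m] c, ⟨m, rfl⟩, hφ.iterate_right m c⟩

lemma HasFiniteOrbit.size_iterate_le {Γ : Type*} [LinearOrder Γ] {f : α → α} {c : α} {size : α → Γ}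
    {r : Γ} (hc : HasFiniteOrbit f c) (hf : ∀ w, r < size w → size w < size (f w)) (m : ℕ) :
    size (f^[m] c) ≤ r := by
  obtain ⟨_, ⟨k, rfl⟩, hmax⟩ := Set.exists_max_image _ size hc ⟨c, 0, rfl⟩
  have hsucc : size (f (f^[k] c)) ≤ size (f^[k] c) :=
    hmax _ ⟨k + 1, Function.iterate_succ_apply' f k c⟩
  exact (hmax _ ⟨m, rfl⟩).trans (not_lt.1 fun h => hsucc.not_gt (hf _ h))

/-- A point `y = (α, c)` of the parameter space encodes a post-critically finite polynomial with
marked critical points: the `c_j` are the critical points of `centredPoly α`, with multiplicity,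
and their orbits are finite. -/
structure IsPCFPoint {R : Type*} [CommRing R] {n : ℕ} (y : Fin n ⊕ Fin n → R) : Prop where
  criticalRelation_eq_zero : criticalRelation y = 0
  hasFiniteOrbit (j : Fin n) :
    HasFiniteOrbit (fun w => (centredPoly (y ∘ .inl)).eval w) (y (.inr j))

lemma IsPCFPoint.map {R S : Type*} [CommRing R] [CommRing S] {n : ℕ} {y : Fin n ⊕ Fin n → R}
    (hy : IsPCFPoint y) (φ : R →+* S) : IsPCFPoint (φ ∘ y) where
  criticalRelation_eq_zero := by
    rw [← map_criticalRelation, hy.criticalRelation_eq_zero, Polynomial.map_zero]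
  hasFiniteOrbit j := (hy.hasFiniteOrbit j).map fun w => by
    rw [← eval_map_apply, map_centredPoly, Function.comp_assoc]

lemma IsPCFPoint.size_criticalValue_le {R Γ : Type*} [CommRing R] [LinearOrder Γ] {n : ℕ}
    {y : Fin n ⊕ Fin n → R} (hy : IsPCFPoint y) {size : R → Γ} {r : Γ}
    (h : ∀ w, r < size w → size w < size ((centredPoly (y ∘ .inl)).eval w)) (j : Fin n) :
    size (criticalValue y j) ≤ r :=
  (hy.hasFiniteOrbit j).size_iterate_le h 1

end Orbit

/-! ### Escape regions -/

section Escape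

variable {n : ℕ}

lemma norm_lt_norm_eval_centredPoly {K : Type*} [NormedField K] (hn : n ≠ 0) {α : Fin n → K} {r : ℝ}
    (hr : 1 ≤ r) (hα : ∀ i, ‖α i‖ ≤ r) {w : K} (hw : (n + 1) * r < ‖w‖) :
    ‖w‖ < ‖(centredPoly α).eval w‖ := by
  have hrw : r ≤ ‖w‖ := le_trans (le_mul_of_one_le_left (by linarith) (by simp)) hw.le
  have hterm (i : Fin n) : ‖α i ^ (n + 1 - (i : ℕ)) * w ^ (i : ℕ)‖ ≤ r * ‖w‖ ^ n :=
    calc ‖α i ^ (n + 1 - (i : ℕ)) * w ^ (i : ℕ)‖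
        = ‖α i‖ * ‖α i‖ ^ (n - (i : ℕ)) * ‖w‖ ^ (i : ℕ) := by
          rw [norm_mul, norm_pow, norm_pow, Nat.succ_sub i.2.le, pow_succ']
      _ ≤ r * ‖w‖ ^ (n - (i : ℕ)) * ‖w‖ ^ (i : ℕ) := by
          gcongr
          exacts [hα i, (hα i).trans hrw]
      _ = r * ‖w‖ ^ n := by rw [mul_assoc, pow_sub_mul_pow _ i.2.le]
  have hsum : ‖∑ i, α i ^ (n + 1 - (i : ℕ)) * w ^ (i : ℕ)‖ ≤ n * (r * ‖w‖ ^ n) := by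
    simpa using norm_sum_le_of_le Finset.univ fun i _ => hterm i
  have hpow : ‖w‖ ≤ ‖w‖ ^ n := le_self_pow₀ (hr.trans hrw) hn
  calc ‖w‖ ≤ ‖w‖ ^ n * 1 := by rwa [mul_one]
    _ < ‖w‖ ^ n * (‖w‖ - n * r) := by
        gcongr
        · exact (zero_lt_one.trans_le (hr.trans hrw)).trans_le hpow
        · linarith
    _ = ‖w ^ (n + 1)‖ - n * (r * ‖w‖ ^ n) := by rw [norm_pow]; ring
    _ ≤ ‖w ^ (n + 1)‖ - ‖∑ i, α i ^ (n + 1 - (i : ℕ)) * w ^ (i : ℕ)‖ := by gcongr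
    _ ≤ ‖(centredPoly α).eval w‖ := by
        rw [eval_centredPoly]
        exact norm_sub_le_norm_add _ _

lemma valuation_lt_valuation_eval_centredPoly {R Γ₀ : Type*} [CommRing R]
    [LinearOrderedCommGroupWithZero Γ₀] (v : Valuation R Γ₀) (hn : n ≠ 0) {α : Fin n → R} {r : Γ₀}
    (hr : 1 ≤ r) (hα : ∀ i, v (α i) ≤ r) {w : R} (hw : r < v w) :
    v w < v ((centredPoly α).eval w) := by
  have hpos : 0 < v w := zero_lt_one.trans (hr.trans_lt hw)
  have hsum : v (∑ i, α i ^ (n + 1 - (i : ℕ)) * w ^ (i : ℕ)) < v (w ^ (n + 1)) := by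
    rw [map_pow]
    refine v.map_sum_lt (pow_pos hpos _).ne' fun i _ => ?_
    rw [map_mul, map_pow, map_pow, ← pow_sub_mul_pow (v w) (show (i : ℕ) ≤ n + 1 by omega)]
    have hlt : v (α i) ^ (n + 1 - (i : ℕ)) < v w ^ (n + 1 - (i : ℕ)) :=
      pow_lt_pow_left₀ ((hα i).trans_lt hw) zero_le (by omega)
    exact mul_lt_mul_of_pos_right hlt (pow_pos hpos _)
  rw [eval_centredPoly, v.map_add_eq_of_lt_left hsum, map_pow]
  exact lt_self_pow₀ (hr.trans_lt hw) (by omega)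

end Escape

/-! ### Local bounds for post-critically finite points -/

section Aeval

variable {k σ : Type*} [CommRing k] (p : MvPolynomial σ k)

lemma norm_aeval_le_sum_norm_coeff {K : Type*} [NormedField K] [Algebra k K] {y : σ → K}
    (hy : ∀ t, ‖y t‖ ≤ 1) :
    ‖MvPolynomial.aeval y p‖ ≤ ∑ m ∈ p.support, ‖algebraMap k K (p.coeff m)‖ := by
  rw [MvPolynomial.aeval_def, MvPolynomial.eval₂_eq]
  refine norm_sum_le_of_le _ fun m _ => ?_
  rw [norm_mul, norm_prod]
  refine mul_le_of_le_one_right (norm_nonneg _)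
    (Finset.prod_le_one (fun t _ => norm_nonneg _) fun t _ => ?_)
  rw [norm_pow]
  exact pow_le_one₀ (norm_nonneg _) (hy t)

lemma valuation_aeval_le {R Γ₀ : Type*} [CommRing R] [Algebra k R]
    [LinearOrderedCommGroupWithZero Γ₀] (v : Valuation R Γ₀) {y : σ → R} {a : Γ₀}
    (hy : ∀ t, v (y t) ≤ 1) (ha : ∀ m, v (algebraMap k R (p.coeff m)) ≤ a) :
    v (MvPolynomial.aeval y p) ≤ a := by
  rw [MvPolynomial.aeval_def, MvPolynomial.eval₂_eq]
  refine v.map_sum_le fun m _ => ?_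
  rw [map_mul, map_prod]
  refine (mul_le_of_le_one_right' (Finset.prod_le_one' fun t _ => ?_)).trans (ha m)
  rw [map_pow]
  exact pow_le_one' (hy t) _

end Aeval

section Archimedean

variable {n : ℕ} {K : Type*} [NormedField K]

lemma IsPCFPoint.norm_criticalValue_le {y : Fin n ⊕ Fin n → K} (hy : IsPCFPoint y) {r : ℝ}
    (hr : 1 ≤ r) (hyr : ∀ t, ‖y t‖ ≤ r) (j : Fin n) : ‖criticalValue y j‖ ≤ (n + 1) * r :=
  hy.size_criticalValue_le (size := norm)
    (fun _ => norm_lt_norm_eval_centredPoly (Fin.pos j).ne' hr fun i => hyr (.inl i)) j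

variable (n K) in
lemma exists_norm_le_of_isPCFPoint [CharZero K] :
    ∃ T : ℝ, ∀ y : Fin n ⊕ Fin n → K, IsPCFPoint y → ∀ t, ‖y t‖ ≤ T := by
  obtain ⟨g, hg⟩ := exists_pow_eq_sum_div_mul_criticalValue n
  let G (s : Fin n ⊕ Fin n) : ℝ := ∑ j, ∑ m ∈ (g s j).support, ‖algebraMap ℚ K ((g s j).coeff m)‖
  refine ⟨max 1 (∑ s, G s * (n + 1)), fun y hy t => ?_⟩
  have : Nonempty (Fin n ⊕ Fin n) := ⟨t⟩
  have hn : n ≠ 0 := t.elim (fun i => (Fin.pos i).ne') fun j => (Fin.pos j).ne'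
  obtain ⟨s, hs⟩ := Finite.exists_max fun t => ‖y t‖
  refine (hs t).trans ?_
  rcases le_total ‖y s‖ 1 with hle | hge
  · exact hle.trans (le_max_left _ _)
  have hpos : 0 < ‖y s‖ := zero_lt_one.trans_le hge
  have hmul : ‖y s‖ ^ n * ‖y s‖ ≤ G s * (n + 1) * ‖y s‖ :=
    calc ‖y s‖ ^ n * ‖y s‖
        = ‖∑ j, MvPolynomial.aeval (fun t => y t / y s) (g s j) * criticalValue y j‖ := by
          rw [← pow_succ, ← norm_pow, hg hy.criticalRelation_eq_zero s (norm_pos_iff.1 hpos)]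
      _ ≤ ∑ j, (∑ m ∈ (g s j).support, ‖algebraMap ℚ K ((g s j).coeff m)‖) *
            ((n + 1) * ‖y s‖) := by
          refine norm_sum_le_of_le _ fun j _ => ?_
          rw [norm_mul]
          gcongr
          · refine norm_aeval_le_sum_norm_coeff _ fun t => ?_
            rw [norm_div]
            exact div_le_one_of_le₀ (hs t) hpos.le
          · exact hy.norm_criticalValue_le hge hs j
      _ = G s * (n + 1) * ‖y s‖ := by rw [← Finset.sum_mul, mul_assoc]
  calc ‖y s‖ ≤ ‖y s‖ ^ n := le_self_pow₀ hge hn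
    _ ≤ G s * (n + 1) := le_of_mul_le_mul_right hmul hpos
    _ ≤ ∑ s, G s * (n + 1) :=
        Finset.single_le_sum (f := fun s => G s * (n + 1)) (fun s _ => by positivity)
          (Finset.mem_univ s)
    _ ≤ _ := le_max_right _ _

variable (n K) in
lemma exists_norm_coeff_le_of_isPCFPoint [CharZero K] :
    ∃ T : ℝ, ∀ y : Fin n ⊕ Fin n → K, IsPCFPoint y →
      ∀ k, ‖(centredPoly (y ∘ .inl)).coeff k‖ ≤ T := by
  obtain ⟨T, hT⟩ := exists_norm_le_of_isPCFPoint n K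
  refine ⟨max 1 T ^ (n + 1), fun y hy k => ?_⟩
  have hone : 1 ≤ max 1 T ^ (n + 1) := one_le_pow₀ (le_max_left 1 T)
  rw [coeff_centredPoly]
  split_ifs with hk htop
  · rw [norm_pow]
    calc ‖y (.inl ⟨k, hk⟩)‖ ^ (n + 1 - k) ≤ max 1 T ^ (n + 1 - k) := by
          gcongr
          exact (hT y hy _).trans (le_max_right 1 T)
      _ ≤ max 1 T ^ (n + 1) := pow_le_pow_right₀ (le_max_left 1 T) (Nat.sub_le _ _)
  · rwa [norm_one]
  · rw [norm_zero]
    exact zero_le_one.trans hone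

end Archimedean

section Nonarchimedean

lemma exists_int_forall_mul_coeff_eq_intCast {ι σ : Type*} [Finite ι] (p : ι → MvPolynomial σ ℚ) :
    ∃ M : ℤ, M ≠ 0 ∧ ∀ i m, ∃ z : ℤ, M * (p i).coeff m = z := by
  have := Fintype.ofFinite ι
  obtain ⟨M, hM⟩ := IsLocalization.exist_integer_multiples (nonZeroDivisors ℤ)
    (Finset.univ.sigma fun i => (p i).support) fun x => (p x.1).coeff x.2
  refine ⟨M, nonZeroDivisors.coe_ne_zero M, fun i m => ?_⟩
  by_cases hm : m ∈ (p i).support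
  · obtain ⟨z, hz⟩ := hM ⟨i, m⟩ (by simpa using hm)
    exact ⟨z, by simpa [Submonoid.smul_def] using hz.symm⟩
  · exact ⟨0, by simp [MvPolynomial.notMem_support_iff.1 hm]⟩

lemma valuation_intCast_le_one {R Γ₀ : Type*} [CommRing R] [LinearOrderedCommGroupWithZero Γ₀]
    (v : Valuation R Γ₀) (z : ℤ) : v (z : R) ≤ 1 :=
  intCast_mem v.integer z

lemma valuation_algebraMap_rat_le_inv {K Γ₀ : Type*} [Field K] [CharZero K]
    [LinearOrderedCommGroupWithZero Γ₀] (v : Valuation K Γ₀) {M z : ℤ} (hM : M ≠ 0) {q : ℚ}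
    (hq : M * q = z) : v (algebraMap ℚ K q) ≤ (v (M : K))⁻¹ := by
  have hmul : (M : K) * algebraMap ℚ K q = z := by simpa using congrArg (algebraMap ℚ K) hq
  rw [← one_div, le_div_iff₀' (v.pos_iff.2 (Int.cast_ne_zero.2 hM)), ← map_mul, hmul]
  exact valuation_intCast_le_one v z

lemma isIntegral_of_forall_valuation_le_one {K : Type*} [Field K] {z : K}
    (h : ∀ A : ValuationSubring K, A.valuation z ≤ 1) : IsIntegral ℤ z := by
  by_contra hz
  have : IsIntegrallyClosedIn (integralClosure ℤ K).toSubring K :=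
    inferInstanceAs (IsIntegrallyClosedIn (integralClosure ℤ K) K)
  obtain ⟨A, -, hA⟩ := Subring.exists_le_valuationSubring_of_isIntegrallyClosedIn
    (R := (integralClosure ℤ K).toSubring) hz
  exact hA ((A.valuation_le_one_iff z).1 (h A))

lemma IsPCFPoint.valuation_criticalValue_le {R Γ₀ : Type*} [CommRing R]
    [LinearOrderedCommGroupWithZero Γ₀] (v : Valuation R Γ₀) {n : ℕ} {y : Fin n ⊕ Fin n → R}
    (hy : IsPCFPoint y) {r : Γ₀} (hr : 1 ≤ r) (hyr : ∀ t, v (y t) ≤ r) (j : Fin n) :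
    v (criticalValue y j) ≤ r :=
  hy.size_criticalValue_le
    (fun _ => valuation_lt_valuation_eval_centredPoly v (Fin.pos j).ne' hr fun i => hyr (.inl i)) j

variable (n : ℕ) (K : Type*) [Field K] [CharZero K]

lemma exists_int_valuation_mul_le_one_of_isPCFPoint : ∃ M : ℤ, M ≠ 0 ∧
    ∀ {Γ₀ : Type*} [LinearOrderedCommGroupWithZero Γ₀] (v : Valuation K Γ₀) (y : Fin n ⊕ Fin n → K),
      IsPCFPoint y → ∀ t, v (M * y t) ≤ 1 := by
  obtain ⟨g, hg⟩ := exists_pow_eq_sum_div_mul_criticalValue n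
  obtain ⟨M, hM, hint⟩ := exists_int_forall_mul_coeff_eq_intCast (Function.uncurry g)
  refine ⟨M, hM, fun v y hy t => ?_⟩
  have : Nonempty (Fin n ⊕ Fin n) := ⟨t⟩
  have hn : n ≠ 0 := t.elim (fun i => (Fin.pos i).ne') fun j => (Fin.pos j).ne'
  have hvM : 0 < v (M : K) := v.pos_iff.2 (Int.cast_ne_zero.2 hM)
  obtain ⟨s, hs⟩ := Finite.exists_max fun t => v (y t)
  have hcoeff (j : Fin n) (m) : v (algebraMap ℚ K ((g s j).coeff m)) ≤ (v (M : K))⁻¹ := by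
    obtain ⟨z, hz⟩ := hint (s, j) m
    exact valuation_algebraMap_rat_le_inv v hM hz
  suffices v (M : K) * v (y s) ≤ 1 by
    rw [map_mul]
    exact (mul_le_mul_right (hs t) _).trans this
  rcases le_total (v (y s)) 1 with hle | hge
  · exact mul_le_one' (valuation_intCast_le_one v M) hle
  have hpos : 0 < v (y s) := zero_lt_one.trans_le hge
  have hmul : v (y s) ^ n * v (y s) ≤ (v (M : K))⁻¹ * v (y s) :=
    calc v (y s) ^ n * v (y s)
        = v (∑ j, MvPolynomial.aeval (fun t => y t / y s) (g s j) * criticalValue y j) := by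
          rw [← pow_succ, ← map_pow, hg hy.criticalRelation_eq_zero s (v.pos_iff.1 hpos)]
      _ ≤ (v (M : K))⁻¹ * v (y s) := by
          refine v.map_sum_le fun j _ => ?_
          rw [map_mul]
          refine mul_le_mul' (valuation_aeval_le _ v (fun t => ?_) (hcoeff j))
            (hy.valuation_criticalValue_le v hge hs j)
          rw [map_div₀]
          exact div_le_one_of_le₀ (hs t) zero_le
  calc v (M : K) * v (y s) ≤ v (M : K) * (v (M : K))⁻¹ := by
        gcongr
        exact (le_self_pow₀ hge hn).trans (le_of_mul_le_mul_right hmul hpos)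
    _ = 1 := mul_inv_cancel₀ hvM.ne'

lemma exists_isIntegral_int_mul_coeff_of_isPCFPoint : ∃ M : ℤ, M ≠ 0 ∧
    ∀ y : Fin n ⊕ Fin n → K, IsPCFPoint y →
      ∀ k, IsIntegral ℤ (M * (centredPoly (y ∘ .inl)).coeff k) := by
  obtain ⟨M, hM, hval⟩ := exists_int_valuation_mul_le_one_of_isPCFPoint n K
  refine ⟨M ^ (n + 1), pow_ne_zero _ hM, fun y hy k => ?_⟩
  rw [coeff_centredPoly]
  split_ifs with hk htop
  · refine isIntegral_of_forall_valuation_le_one fun A => ?_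
    have hsplit : ((M ^ (n + 1) : ℤ) : K) * y (.inl ⟨k, hk⟩) ^ (n + 1 - k) =
        M ^ k * (M * y (.inl ⟨k, hk⟩)) ^ (n + 1 - k) := by
      rw [Int.cast_pow, ← pow_mul_pow_sub (M : K) (show k ≤ n + 1 by omega)]
      ring
    rw [Function.comp_apply, hsplit, map_mul, map_pow, map_pow]
    exact mul_le_one' (pow_le_one' (valuation_intCast_le_one _ M) _)
      (pow_le_one' (hval _ y hy _) _)
  · rw [mul_one]
    exact isIntegral_algebraMap (R := ℤ) (A := K)
  · rw [mul_zero]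
    exact isIntegral_zero

end Nonarchimedean

/-! ### Northcott finiteness -/

section Northcott

lemma natDegree_minpoly_le_finrank {F E : Type*} [Field F] [Field E] [Algebra F E]
    (L : IntermediateField F E) [FiniteDimensional F L] {b : E} (hb : b ∈ L) :
    (minpoly F b).natDegree ≤ Module.finrank F L := by
  have h := minpoly.algebraMap_eq (A := F) (FaithfulSMul.algebraMap_injective L E) ⟨b, hb⟩
  rw [IntermediateField.algebraMap_apply] at h
  rw [h]
  exact minpoly.natDegree_le _

variable {K : Type*} [Field K] [CharZero K] [Algebra.IsAlgebraic ℚ K]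

lemma mahlerMeasure_minpoly_le {a : K} (ha : IsIntegral ℤ a) {T : ℝ}
    (hT : ∀ φ : K →+* ℂ, ‖φ a‖ ≤ T) :
    ((minpoly ℤ a).map (Int.castRingHom ℂ)).mahlerMeasure ≤
      max 1 T ^ (minpoly ℤ a).natDegree := by
  have hmonic : ((minpoly ℤ a).map (Int.castRingHom ℂ)).Monic := (minpoly.monic ha).map _
  have hroot (z : ℂ) (hz : z ∈ ((minpoly ℤ a).map (Int.castRingHom ℂ)).roots) :
      ∃ φ : K →+* ℂ, φ a = z := by
    have hmem : z ∈ (minpoly ℚ a).rootSet ℂ := by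
      rwa [minpoly.isIntegrallyClosed_eq_field_fractions' ℚ ha, rootSet, aroots_map, aroots_def,
        algebraMap_int_eq, Finset.mem_coe, Multiset.mem_toFinset]
    rw [← Algebra.IsAlgebraic.range_eval_eq_rootSet_minpoly] at hmem
    obtain ⟨φ, rfl⟩ := hmem
    exact ⟨φ, rfl⟩
  have hcard : ((minpoly ℤ a).map (Int.castRingHom ℂ)).roots.card = (minpoly ℤ a).natDegree := by
    rw [splits_iff_card_roots.1 (IsAlgClosed.splits _), (minpoly.monic ha).natDegree_map]
  rw [mahlerMeasure_eq_leadingCoeff_mul_prod_roots, hmonic.leadingCoeff, norm_one, one_mul,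
    ← hcard, ← Multiset.prod_replicate, ← Multiset.map_const']
  refine Multiset.prod_map_le_prod_map₀ _ _ (fun z _ => by positivity) fun z hz => ?_
  obtain ⟨φ, rfl⟩ := hroot z hz
  exact max_le_max_left 1 (hT φ)

variable (K) in
lemma finite_setOf_isIntegral_of_natDegree_le_of_norm_le (D : ℕ) (T : ℝ) :
    {a : K | IsIntegral ℤ a ∧ (minpoly ℚ a).natDegree ≤ D ∧ ∀ φ : K →+* ℂ, ‖φ a‖ ≤ T}.Finite := by
  refine ((finite_mahlerMeasure_le D (max 1 T ^ D).toNNReal).biUnion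
    fun p _ => p.rootSet_finite K).subset ?_
  rintro a ⟨ha, hdeg, hT⟩
  rw [minpoly.isIntegrallyClosed_eq_field_fractions' ℚ ha, (minpoly.monic ha).natDegree_map]
    at hdeg
  refine Set.mem_biUnion ⟨hdeg, ?_⟩
    (mem_rootSet.2 ⟨minpoly.ne_zero ha, minpoly.aeval ℤ a⟩)
  rw [Real.coe_toNNReal _ (by positivity)]
  exact (mahlerMeasure_minpoly_le ha hT).trans (pow_le_pow_right₀ (le_max_left 1 T) hdeg)

variable (K) in
lemma finite_setOf_isIntegral_int_mul_of_finrank_le_of_norm_le {M : ℤ} (hM : M ≠ 0) (D : ℕ)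
    (T : ℝ) :
    {a : K | IsIntegral ℤ (M * a) ∧ Module.finrank ℚ (IntermediateField.adjoin ℚ {a}) ≤ D ∧
      ∀ φ : K →+* ℂ, ‖φ a‖ ≤ T}.Finite := by
  have hM' : (M : K) ≠ 0 := Int.cast_ne_zero.2 hM
  refine ((finite_setOf_isIntegral_of_natDegree_le_of_norm_le K D (‖(M : ℂ)‖ * T)).preimage
    (mul_right_injective₀ hM').injOn).subset ?_
  rintro a ⟨hint, hdeg, hT⟩
  have := IntermediateField.adjoin.finiteDimensional (Algebra.IsIntegral.isIntegral (R := ℚ) a)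
  have hmem : (M : K) * a ∈ IntermediateField.adjoin ℚ {a} :=
    mul_mem (intCast_mem _ M) (IntermediateField.mem_adjoin_simple_self ℚ a)
  refine ⟨hint, (natDegree_minpoly_le_finrank _ hmem).trans hdeg, fun φ => ?_⟩
  rw [map_mul, map_intCast, norm_mul]
  gcongr
  exact hT φ

lemma finite_setOf_natDegree_le_of_coeff_mem {R : Type*} [Semiring R] (D : ℕ) {S : Set R}
    (hS : S.Finite) : {f : R[X] | f.natDegree ≤ D ∧ ∀ k, f.coeff k ∈ S}.Finite := by
  have hpi : (Set.univ.pi fun _ : Fin (D + 1) => S).Finite := Set.Finite.pi fun _ => hS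
  refine Set.Finite.of_finite_image (f := fun f (i : Fin (D + 1)) => f.coeff i)
    (hpi.subset ?_) fun f hf g hg hfg => ?_
  · rintro _ ⟨f, hf, rfl⟩ i -
    exact hf.2 i
  · exact (ext_iff_natDegree_le hf.1 hg.1).2 fun i hi => congrFun hfg ⟨i, Nat.lt_succ_of_le hi⟩

end Northcott

/-! ### Post-critically finite polynomials as points -/

section Parameters

variable {K : Type*} [Field K]

lemma exists_eq_C_leadingCoeff_mul_prod_X_sub_C {p : K[X]} (hp : p.Splits) {n : ℕ}
    (hn : p.natDegree = n) : ∃ c : Fin n → K, p = C p.leadingCoeff * ∏ j, (X - C (c j)) := by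
  have hcard : Fintype.card p.roots = n := by
    rw [Multiset.card_coe, splits_iff_card_roots.1 hp, hn]
  let e : Fin n ≃ p.roots := (Fintype.equivFinOfCardEq hcard).symm
  refine ⟨fun j => (e j).1, ?_⟩
  rw [e.prod_comp fun x => X - C x.1, ← Finset.prod_map_val, Multiset.map_univ p.roots (X - C ·)]
  exact hp.eq_prod_roots

lemma exists_eq_centredPoly [IsAlgClosed K] {n : ℕ} {f : K[X]} (hmonic : f.Monic)
    (hdeg : f.natDegree = n + 1) (hcentred : f.coeff n = 0) :
    ∃ α : Fin n → K, f = centredPoly α := by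
  have hroot (i : Fin n) : ∃ a, a ^ (n + 1 - (i : ℕ)) = f.coeff i :=
    IsAlgClosed.exists_pow_nat_eq _ (by omega)
  choose α hα using hroot
  refine ⟨α, Polynomial.ext fun k => ?_⟩
  rw [coeff_centredPoly]
  split_ifs with hk htop
  · exact (hα ⟨k, hk⟩).symm
  · rw [htop, ← hdeg]
    exact hmonic
  · rcases eq_or_ne k n with rfl | hkn
    · exact hcentred
    · exact coeff_eq_zero_of_natDegree_lt (by omega)

lemma exists_isPCFPoint_eq_centredPoly [CharZero K] [IsAlgClosed K] {n : ℕ} {f : K[X]}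
    (hmonic : f.Monic) (hdeg : f.natDegree = n + 1) (hcentred : f.coeff n = 0)
    (hpcf : ∀ c, (derivative f).IsRoot c → HasFiniteOrbit (fun w => f.eval w) c) :
    ∃ y : Fin n ⊕ Fin n → K, f = centredPoly (y ∘ .inl) ∧ IsPCFPoint y := by
  obtain ⟨α, rfl⟩ := exists_eq_centredPoly hmonic hdeg hcentred
  obtain ⟨c, hc⟩ := exists_eq_C_leadingCoeff_mul_prod_X_sub_C (n := n)
    (IsAlgClosed.splits (derivative (centredPoly α)))
    (by rw [natDegree_derivative, hdeg, Nat.add_sub_cancel])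
  rw [leadingCoeff_derivative, hmonic.leadingCoeff, hdeg] at hc
  have hrel : criticalRelation (Sum.elim α c) = 0 := by
    rw [criticalRelation, Sum.elim_comp_inl, hc]
    simp
  refine ⟨Sum.elim α c, by rw [Sum.elim_comp_inl], hrel, fun j => ?_⟩
  exact hpcf _ ((isRoot_derivative_centredPoly hrel).2 ⟨j, rfl⟩)

end Parameters

/-- The `ℚ`-algebra structure found by instance search on `Qbar` is the one of a characteristic-zero
division ring, equal but not syntactically identical to that of `AlgebraicClosure ℚ`. -/
instance isAlgebraic_qbar : Algebra.IsAlgebraic ℚ Qbar := by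
  convert! AlgebraicClosure.isAlgebraic ℚ

/-- For `d ≥ 2` and `B ≥ 1`, the set of monic centred post-critically
finite polynomials of degree `d` over `ℚ̄` all of whose coefficients generate an extension
of `ℚ` of degree at most `B` is finite. -/
theorem finite_pcf_of_bounded_degree (d : ℕ) (hd : 2 ≤ d) (B : ℝ) (hB : 1 ≤ B) :
    {f : Polynomial Qbar | MonicCentred f d ∧
      (∀ i : ℕ, (Module.finrank ℚ
        (IntermediateField.adjoin ℚ {f.coeff i} : IntermediateField ℚ Qbar) : ℝ) ≤ B) ∧
      (∀ c : Qbar, (derivative f).eval c = 0 →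
        (Set.range fun n : ℕ => (fun w => f.eval w)^[n] c).Finite)}.Finite := by
  obtain ⟨n, rfl⟩ : ∃ n, d = n + 1 := ⟨d - 1, by omega⟩
  obtain ⟨M, hM, hint⟩ := exists_isIntegral_int_mul_coeff_of_isPCFPoint n Qbar
  obtain ⟨T, hT⟩ := exists_norm_coeff_le_of_isPCFPoint n ℂ
  have hfinite := finite_setOf_isIntegral_int_mul_of_finrank_le_of_norm_le Qbar hM ⌊B⌋₊ T
  refine (finite_setOf_natDegree_le_of_coeff_mem (n + 1) hfinite).subset ?_
  rintro f ⟨⟨hmonic, hdeg, hcentred⟩, hrank, hpcf⟩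
  obtain ⟨y, rfl, hy⟩ := exists_isPCFPoint_eq_centredPoly hmonic hdeg hcentred hpcf
  refine ⟨hdeg.le, fun k => ⟨hint y hy k, Nat.le_floor (hrank k), fun φ => ?_⟩⟩
  rw [← coeff_map, map_centredPoly, ← Function.comp_assoc]
  exact hT _ (hy.map φ) k

end PCF
end
end

section
/- Let K be a field equipped with a nonarchimedean (ultrametric) absolute value |·|, let d ≥ 2, and let f(z) = a_d z^d + a_{d−1}z^{d−1} + ⋯ + a₁z + a₀ ∈ K[z] with a_d ≠ 0. Set C_f = max({1, |a_d|^{−1/(d−1)}} ∪ {|a_i/a_d|^{1/(d−i)} : 0 ≤ i < d}). If z ∈ K satisfies |z| > C_f, then the sequence d^{−N}·log max(1, |f^N(z)|) converges as N → ∞ to log|z| + (1/(d−1))·log|a_d|. -/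
/-!
Where the leading monomial of `f` strictly dominates all the others, the ultrametric inequality
turns into the equality `|f(w)| = |a_d| |w|^d`. If moreover `|a_d| |w|^(d-1) ≥ 1`, then
`|f(w)| ≥ |w|`, and both conditions survive an increase of `|w|`, so the whole orbit of `w`
satisfies them. Hence `log |f^N(w)|` obeys the affine recurrence `u ↦ d u + log |a_d|`, and
`d^{-N} log |f^N(w)|` tends to `L = log |w| + log |a_d| / (d - 1)`. The truncation `max (1, ·)`
changes nothing in the limit because `(d - 1) L = log (|a_d| |w|^(d-1)) ≥ 0`.
-/

open Polynomial

noncomputable section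

namespace PCF

open Filter Topology

lemma tendsto_inv_pow_mul_arithGeom {F : Type*} [Field F] [LinearOrder F] [IsStrictOrderedRing F]
    [Archimedean F] [TopologicalSpace F] [OrderTopology F] {a b u₀ : F} (ha : 1 < a) :
    Tendsto (fun n ↦ (a ^ n)⁻¹ * arithGeom a b u₀ n) atTop (𝓝 (u₀ + b / (a - 1))) := by
  have ha₀ : 0 < a := one_pos.trans ha
  have hgeom : Tendsto (fun n : ℕ ↦ a⁻¹ ^ n) atTop (𝓝 0) :=
    tendsto_pow_atTop_nhds_zero_of_lt_one (inv_nonneg.2 ha₀.le) (inv_lt_one_of_one_lt₀ ha)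
  have hsplit (n : ℕ) :
      (a ^ n)⁻¹ * arithGeom a b u₀ n = u₀ + b / (a - 1) + a⁻¹ ^ n * (b / (1 - a)) := by
    rw [arithGeom_eq ha.ne', mul_add, inv_mul_cancel_left₀ (pow_pos ha₀ n).ne', inv_pow,
      ← neg_sub a 1, div_neg, sub_neg_eq_add]
  simpa only [hsplit, zero_mul, add_zero] using (hgeom.mul_const (b / (1 - a))).const_add _

lemma log_eq_arithGeom_of_succ_eq_mul_pow {a : ℝ} {d : ℕ} {r : ℕ → ℝ} (ha : a ≠ 0)
    (hr : ∀ n, r n ≠ 0) (hsucc : ∀ n, r (n + 1) = a * r n ^ d) (n : ℕ) :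
    Real.log (r n) = arithGeom (d : ℝ) (Real.log a) (Real.log (r 0)) n := by
  induction n with
  | zero => rfl
  | succ n ih =>
    rw [hsucc, Real.log_mul ha (pow_ne_zero d (hr n)), Real.log_pow, ih, arithGeom_succ, add_comm]

lemma rpow_neg_one_div_le_iff_one_le_mul_pow {a x : ℝ} {n : ℕ} (ha : 0 < a) (hx : 0 ≤ x)
    (hn : n ≠ 0) : a ^ (-(1 : ℝ) / n) ≤ x ↔ 1 ≤ a * x ^ n := by
  rw [neg_div, Real.rpow_neg_eq_inv_rpow, one_div,
    Real.rpow_inv_le_iff_of_pos (inv_nonneg.2 ha.le) hx (by positivity), Real.rpow_natCast,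
    inv_le_iff_one_le_mul₀' ha]

lemma div_rpow_one_div_lt_iff_lt_mul_pow {a b x : ℝ} {n : ℕ} (ha : 0 < a) (hb : 0 ≤ b)
    (hx : 0 ≤ x) (hn : n ≠ 0) : (b / a) ^ ((1 : ℝ) / n) < x ↔ b < a * x ^ n := by
  rw [one_div, Real.rpow_inv_lt_iff_of_pos (div_nonneg hb ha.le) hx (by positivity),
    Real.rpow_natCast, div_lt_iff₀' ha]

/-- The points `z` at which the leading monomial of `f` strictly dominates the others and
`|a_d| |z|^(d-1) ≥ 1`, so that a nonarchimedean `v` does not decrease along the orbit of `z` under a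
nonconstant `f`. Clearing roots in the inequality `|z| > C_f` yields these conditions; in this form
they make sense over a ring. -/
def escapeRegion {R S : Type*} [Semiring R] [Semiring S] [PartialOrder S]
    (v : AbsoluteValue R S) (f : R[X]) : Set R :=
  {z | 1 ≤ v f.leadingCoeff * v z ^ (f.natDegree - 1) ∧
    ∀ i < f.natDegree, v (f.coeff i) < v f.leadingCoeff * v z ^ (f.natDegree - i)}

section Semiring

variable {R S : Type*} [Semiring R] [Semiring S] [PartialOrder S] {v : AbsoluteValue R S}
  {f : R[X]} {z w : R}

lemma ne_zero_of_mem_escapeRegion (hf : f.natDegree ≠ 0) (hz : z ∈ escapeRegion v f) :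
    z ≠ 0 := by
  rintro rfl
  have hconst := hz.2 0 (Nat.pos_of_ne_zero hf)
  rw [map_zero, Nat.sub_zero, zero_pow hf, mul_zero] at hconst
  exact hconst.not_ge (v.nonneg _)

variable [IsStrictOrderedRing S]

lemma leadingCoeff_ne_zero_of_mem_escapeRegion (hz : z ∈ escapeRegion v f) :
    f.leadingCoeff ≠ 0 := by
  intro h
  have hone := hz.1
  rw [h, map_zero, zero_mul] at hone
  exact (zero_lt_one' S).not_ge hone

lemma mem_escapeRegion_of_apply_le (hz : z ∈ escapeRegion v f) (hzw : v z ≤ v w) :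
    w ∈ escapeRegion v f := by
  have hmono (k : ℕ) : v f.leadingCoeff * v z ^ k ≤ v f.leadingCoeff * v w ^ k :=
    mul_le_mul_of_nonneg_left (pow_le_pow_left₀ (v.nonneg z) hzw k) (v.nonneg _)
  exact ⟨hz.1.trans (hmono _), fun i hi ↦ (hz.2 i hi).trans_le (hmono _)⟩

end Semiring

section Ring

variable {R S : Type*} [Ring R] [Nontrivial R] [CommRing S] [LinearOrder S]
  [IsStrictOrderedRing S] {v : AbsoluteValue R S} {f : R[X]} {z : R}

lemma apply_eval_eq_of_forall_monomial_lt (hna : IsNonarchimedean v)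
    (hdom : ∀ i < f.natDegree, v (f.coeff i * z ^ i) < v (f.leadingCoeff * z ^ f.natDegree)) :
    v (f.eval z) = v f.leadingCoeff * v z ^ f.natDegree := by
  have hsum : v (∑ i ∈ Finset.range (f.natDegree + 1), f.coeff i * z ^ i) =
      v (f.leadingCoeff * z ^ f.natDegree) := by
    refine hna.apply_sum_eq_of_lt (fun x ↦ (v.map_neg x).symm) (Finset.self_mem_range_succ _) ?_
    exact fun i hi hne ↦ hdom i (lt_of_le_of_ne (Finset.mem_range_succ_iff.1 hi) hne)
  rw [eval_eq_sum_range, hsum, map_mul, map_pow]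

lemma apply_eval_of_mem_escapeRegion (hna : IsNonarchimedean v) (hf : f.natDegree ≠ 0)
    (hz : z ∈ escapeRegion v f) : v (f.eval z) = v f.leadingCoeff * v z ^ f.natDegree := by
  refine apply_eval_eq_of_forall_monomial_lt hna fun i hi ↦ ?_
  have hzpos : 0 < v z := v.pos (ne_zero_of_mem_escapeRegion hf hz)
  calc
    v (f.coeff i * z ^ i) = v (f.coeff i) * v z ^ i := by rw [map_mul, map_pow]
    _ < v f.leadingCoeff * v z ^ (f.natDegree - i) * v z ^ i :=
      mul_lt_mul_of_pos_right (hz.2 i hi) (pow_pos hzpos i)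
    _ = v (f.leadingCoeff * z ^ f.natDegree) := by
      rw [mul_assoc, pow_sub_mul_pow _ hi.le, map_mul, map_pow]

lemma apply_le_apply_eval_of_mem_escapeRegion (hna : IsNonarchimedean v) (hf : f.natDegree ≠ 0)
    (hz : z ∈ escapeRegion v f) : v z ≤ v (f.eval z) :=
  calc
    v z ≤ v f.leadingCoeff * v z ^ (f.natDegree - 1) * v z :=
      le_mul_of_one_le_left (v.nonneg z) hz.1
    _ = v (f.eval z) := by
      rw [mul_assoc, pow_sub_one_mul hf, apply_eval_of_mem_escapeRegion hna hf hz]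

lemma mapsTo_eval_escapeRegion (hna : IsNonarchimedean v) (hf : f.natDegree ≠ 0) :
    Set.MapsTo (fun w ↦ f.eval w) (escapeRegion v f) (escapeRegion v f) := fun _ hz ↦
  mem_escapeRegion_of_apply_le hz (apply_le_apply_eval_of_mem_escapeRegion hna hf hz)

end Ring

lemma log_apply_add_nonneg_of_mem_escapeRegion {R : Type*} [Semiring R] {v : AbsoluteValue R ℝ}
    {f : R[X]} {z : R} (hf : 2 ≤ f.natDegree) (hz : z ∈ escapeRegion v f) :
    0 ≤ Real.log (v z) + Real.log (v f.leadingCoeff) / ((f.natDegree : ℝ) - 1) := by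
  have hlead : v f.leadingCoeff ≠ 0 := v.ne_zero (leadingCoeff_ne_zero_of_mem_escapeRegion hz)
  have hvz : v z ≠ 0 := v.ne_zero (ne_zero_of_mem_escapeRegion (by lia) hz)
  have hpos : (0 : ℝ) < (f.natDegree : ℝ) - 1 := sub_pos.2 (by exact_mod_cast hf)
  have hlog := Real.log_nonneg hz.1
  rw [Real.log_mul hlead (pow_ne_zero _ hvz), Real.log_pow, Nat.cast_pred (by lia)] at hlog
  rw [← mul_div_cancel_left₀ (Real.log (v z)) hpos.ne', ← add_div]
  exact div_nonneg (by rwa [add_comm]) hpos.le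

section EscapeRate

variable {R : Type*} [Ring R] [Nontrivial R] {v : AbsoluteValue R ℝ} {f : R[X]} {z : R}

lemma log_apply_iterate_eval_eq_arithGeom (hna : IsNonarchimedean v) (hf : f.natDegree ≠ 0)
    (hz : z ∈ escapeRegion v f) (N : ℕ) :
    Real.log (v ((fun w ↦ f.eval w)^[N] z)) =
      arithGeom (f.natDegree : ℝ) (Real.log (v f.leadingCoeff)) (Real.log (v z)) N := by
  have horbit (n : ℕ) : (fun w ↦ f.eval w)^[n] z ∈ escapeRegion v f :=
    (mapsTo_eval_escapeRegion hna hf).iterate n hz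
  refine log_eq_arithGeom_of_succ_eq_mul_pow (r := fun n ↦ v ((fun w ↦ f.eval w)^[n] z))
    (v.ne_zero (leadingCoeff_ne_zero_of_mem_escapeRegion hz))
    (fun n ↦ v.ne_zero (ne_zero_of_mem_escapeRegion hf (horbit n))) (fun n ↦ ?_) N
  rw [Function.iterate_succ_apply', apply_eval_of_mem_escapeRegion hna hf (horbit n)]

theorem escape_rate_nonarchimedean_general (hna : IsNonarchimedean v) (hf : 2 ≤ f.natDegree)
    (hz : z ∈ escapeRegion v f) :
    Tendsto
      (fun N : ℕ ↦ ((f.natDegree : ℝ) ^ N)⁻¹ *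
        Real.log (max 1 (v ((fun w ↦ f.eval w)^[N] z))))
      atTop
      (𝓝 (Real.log (v z) + (1 / ((f.natDegree : ℝ) - 1)) * Real.log (v f.leadingCoeff))) := by
  have hlim := tendsto_inv_pow_mul_arithGeom (a := (f.natDegree : ℝ))
    (b := Real.log (v f.leadingCoeff)) (u₀ := Real.log (v z)) (by exact_mod_cast hf)
  have htrunc (N : ℕ) :
      ((f.natDegree : ℝ) ^ N)⁻¹ * Real.log (max 1 (v ((fun w ↦ f.eval w)^[N] z))) =
        max 0 (((f.natDegree : ℝ) ^ N)⁻¹ * arithGeom (f.natDegree : ℝ)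
          (Real.log (v f.leadingCoeff)) (Real.log (v z)) N) := by
    rw [← log_apply_iterate_eval_eq_arithGeom hna (by lia) hz,
      ← Real.posLog_eq_log_max_one (v.nonneg _), Real.posLog_apply,
      mul_max_of_nonneg _ _ (by positivity), mul_zero]
  rw [one_div_mul_eq_div, ← max_eq_right (log_apply_add_nonneg_of_mem_escapeRegion hf hz)]
  simpa only [htrunc] using tendsto_const_nhds.max hlim

end EscapeRate

lemma mem_escapeRegion_iff_rpow {K : Type*} [Field K] {v : AbsoluteValue K ℝ} {f : K[X]} {z : K}
    (hf : 2 ≤ f.natDegree) :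
    z ∈ escapeRegion v f ↔
      v f.leadingCoeff ^ (-(1 : ℝ) / ((f.natDegree : ℝ) - 1)) ≤ v z ∧
        ∀ i : Fin f.natDegree,
          v (f.coeff i / f.leadingCoeff) ^ ((1 : ℝ) / ((f.natDegree : ℝ) - (i : ℕ))) < v z := by
  have hlead : 0 < v f.leadingCoeff :=
    v.pos (leadingCoeff_ne_zero.2 (ne_zero_of_natDegree_gt hf))
  rw [← Nat.cast_pred (by lia),
    rpow_neg_one_div_le_iff_one_le_mul_pow hlead (v.nonneg z) (by lia)]
  refine and_congr_right' (Fin.forall_iff.trans (forall₂_congr fun i hi ↦ ?_)).symm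
  rw [map_div₀, ← Nat.cast_sub hi.le,
    div_rpow_one_div_lt_iff_lt_mul_pow hlead (v.nonneg _) (v.nonneg z) (by lia)]

/-- Let `K` be a field with a nonarchimedean absolute value `v`, and let
`f = a_d z^d + ⋯ + a_0 ∈ K[z]` with `d ≥ 2` and `a_d ≠ 0`.  If
`|z| > C_f = max {1, |a_d|^{-1/(d-1)}, |a_i/a_d|^{1/(d-i)} (0 ≤ i < d)}`, then
`d^{-N} log max (1, |f^N(z)|)` converges to `log |z| + (1/(d-1)) log |a_d|`. -/
theorem escape_rate_nonarchimedean {K : Type} [Field K] (v : AbsoluteValue K ℝ)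
    (hna : ∀ x y : K, v (x + y) ≤ max (v x) (v y))
    (d : ℕ) (hd : 2 ≤ d) (f : Polynomial K) (hdeg : f.natDegree = d)
    (hlead : f.coeff d ≠ 0) (z : K)
    (hz : max (max 1 (v (f.coeff d) ^ (-(1 : ℝ) / ((d : ℝ) - 1))))
        (⨆ i : Fin d, v (f.coeff i / f.coeff d) ^ ((1 : ℝ) / ((d : ℝ) - (i : ℕ))))
      < v z) :
    Filter.Tendsto
      (fun N : ℕ => ((d : ℝ) ^ N)⁻¹ * Real.log (max 1 (v ((fun w => f.eval w)^[N] z))))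
      Filter.atTop
      (nhds (Real.log (v z) + (1 / ((d : ℝ) - 1)) * Real.log (v (f.coeff d)))) := by
  subst hdeg
  obtain ⟨⟨-, hgrow⟩, hdom⟩ := by simpa only [max_lt_iff] using hz
  exact escape_rate_nonarchimedean_general hna hd <| (mem_escapeRegion_iff_rpow hd).2
    ⟨hgrow.le, fun i ↦ (le_ciSup (Set.finite_range _).bddAbove i).trans_lt hdom⟩

end PCF
end
end

section
/- Let K be a field of characteristic 0, let d ≥ 2, and let c = (c₁,…,c_{d−1}) ∈ K^{d−1}. If f_c(cᵢ) = 0 for every i = 1,…,d−1, then c₁ = c₂ = ⋯ = c_{d−1} = 0. -/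
/-!
In characteristic zero a root of `f` of multiplicity `m + 1` is a root of `f'` of multiplicity `m`.
If moreover every root of `f'` is a root of `f`, then `f` has exactly as many roots more than `f'`,
counted with multiplicity, as it has distinct roots. When `f'` splits, it has `deg f - 1` roots,
which leaves room for only one distinct root of `f`. For `f_c`, one root is `0`.
-/

open Polynomial

noncomputable section

namespace PCF

section CharZeroDomain

variable {R : Type*} [CommRing R] [IsDomain R] [CharZero R]

theorem count_roots_eq_count_roots_derivative_add_one [DecidableEq R] {f : R[X]} {a : R}
    (ha : a ∈ f.roots) : f.roots.count a = (derivative f).roots.count a + 1 := by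
  have hpos : 0 < f.roots.count a := Multiset.count_pos.mpr ha
  rw [count_roots] at hpos ⊢
  rw [count_roots, derivative_rootMultiplicity_of_root (isRoot_of_mem_roots ha),
    Nat.sub_add_cancel hpos]

theorem roots_eq_roots_derivative_add_dedup_s9 [DecidableEq R] {f : R[X]}
    (h : (derivative f).roots ⊆ f.roots) :
    f.roots = (derivative f).roots + f.roots.dedup := by
  ext a
  rw [Multiset.count_add, Multiset.count_dedup]
  split_ifs with ha
  · exact count_roots_eq_count_roots_derivative_add_one ha
  · rw [Multiset.count_eq_zero_of_notMem ha, Multiset.count_eq_zero_of_notMem (mt (@h a) ha)]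

theorem card_toFinset_roots_le_one_of_splits_derivative [DecidableEq R] {f : R[X]}
    (hsplits : (derivative f).Splits) (h : (derivative f).roots ⊆ f.roots) :
    f.roots.toFinset.card ≤ 1 := by
  have hcard : f.roots.card = (f.natDegree - 1) + f.roots.toFinset.card := by
    rw [← natDegree_derivative, hsplits.natDegree_eq_card_roots, Multiset.card_toFinset,
      ← Multiset.card_add, ← roots_eq_roots_derivative_add_dedup_s9 h]
  have hle : f.roots.card ≤ f.natDegree := card_roots' f
  omega

theorem crit_coords_zero_of_all_roots_general {ι : Type*} [Fintype ι] (c : ι → R) (f : R[X])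
    (h0 : f.eval 0 = 0) (hder : derivative f = ∏ i, (X - C (c i)))
    (hroot : ∀ i, f.eval (c i) = 0) :
    ∀ i, c i = 0 := by
  classical
  have hf : f ≠ 0 := by
    rintro rfl
    exact (monic_prod_X_sub_C c Finset.univ).ne_zero (hder.symm.trans derivative_zero)
  have hsplits : (derivative f).Splits := hder ▸ Splits.prod fun i _ => Splits.X_sub_C (c i)
  have hsub : (derivative f).roots ⊆ f.roots := by
    intro a ha
    have hprod : (∏ i, (X - C (c i))).IsRoot a := hder ▸ isRoot_of_mem_roots ha
    obtain ⟨i, -, hi⟩ := (isRoot_prod _ _ _).mp hprod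
    obtain rfl : c i = a := root_X_sub_C.mp hi
    exact (mem_roots hf).mpr (hroot i)
  have hone := card_toFinset_roots_le_one_of_splits_derivative hsplits hsub
  have hmem {a : R} (ha : f.eval a = 0) : a ∈ f.roots.toFinset :=
    Multiset.mem_toFinset.mpr ((mem_roots hf).mpr ha)
  exact fun i => Finset.card_le_one.mp hone _ (hmem (hroot i)) _ (hmem h0)

end CharZeroDomain

/-- Let `K` be a field of characteristic 0, `d ≥ 2`, and
`c = (c₁, …, c_{d-1}) ∈ K^{d-1}`.  Let `f_c ∈ K[z]` be the unique polynomial with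
`f_c(0) = 0` and `f_c′(z) = (z-c₁)⋯(z-c_{d-1})`.  If `f_c(cᵢ) = 0` for every `i`, then
all the `cᵢ` vanish. -/
theorem crit_coords_zero_of_all_roots (K : Type) [Field K] [CharZero K] (d : ℕ)
    (hd : 2 ≤ d) (c : Fin (d - 1) → K) (f : Polynomial K)
    (h0 : f.eval 0 = 0) (hder : derivative f = ∏ i, (X - C (c i)))
    (hroot : ∀ i, f.eval (c i) = 0) :
    ∀ i, c i = 0 := by
  exact crit_coords_zero_of_all_roots_general c f h0 hder hroot

end PCF
end
end

section
/- Let c ∈ ℚ and let f(z) = z² + c. If the forward orbit {f^n(0) : n ≥ 0} of the critical point 0 is finite, then c ∈ {0, −1, −2}. -/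
/-!
Suppose that a size function `N` strictly increases under `f(z) = z² + c` at every `x` with
`N c ≤ N x`. Then `N` strictly increases along the orbit of the critical value `c`, so the critical
orbit is infinite. Three choices of `N` bound a parameter `c` with finite critical orbit:

* a valuation `v`: if `v c > 1`, then `v x ≥ v c` forces `v (x² + c) = (v x)² > v x`. Hence
  `v c ≤ 1` for all `v`, which makes `c` integral over `ℤ`, as an integrally closed subring of a
  field is the intersection of the valuation subrings containing it;
* an absolute value: if `|c| > 2`, then `|x| ≥ |c|` forces `|x² + c| ≥ |x|² - |x| > |x|`. Hence
  `|c| ≤ 2`;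
* the identity of an ordered ring: if `4c > 1`, then `x² + c > x` for every `x`. Hence `4c ≤ 1`.

An integer in `[-2, 1/4]` is `0`, `-1` or `-2`.
-/

namespace PCF

theorem strictMono_comp_iterate_of_forall_lt {α β : Type*} [Preorder β] {f : α → α} {a : α}
    (N : α → β) (h : ∀ x, N a ≤ N x → N x < N (f x)) : StrictMono fun n : ℕ => N (f^[n] a) := by
  have maps : Set.MapsTo f {x | N a ≤ N x} {x | N a ≤ N x} := fun x hx => hx.trans (h x hx).le
  refine strictMono_nat_of_lt_succ fun n => ?_
  rw [Function.iterate_succ_apply']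
  exact h _ (maps.iterate n le_rfl)

/-- The forward orbit of the critical point `0` under the quadratic polynomial `z ^ 2 + c`,
including `0` itself. -/
def criticalOrbit {R : Type*} [Semiring R] (c : R) : Set R :=
  Set.range fun n : ℕ => (fun z : R => z ^ 2 + c)^[n] 0

theorem iterate_mem_criticalOrbit {R : Type*} [Semiring R] (c : R) (n : ℕ) :
    (fun z : R => z ^ 2 + c)^[n] c ∈ criticalOrbit c :=
  ⟨n + 1, by simp [Function.iterate_succ_apply]⟩

theorem criticalOrbit_infinite_of_forall_lt {R β : Type*} [Semiring R] [Preorder β] {c : R}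
    (N : R → β) (h : ∀ x, N c ≤ N x → N x < N (x ^ 2 + c)) : (criticalOrbit c).Infinite :=
  Set.infinite_of_injective_forall_mem
    (strictMono_comp_iterate_of_forall_lt (f := fun z => z ^ 2 + c) N h).injective.of_comp
    (iterate_mem_criticalOrbit c)

theorem valuation_le_one_of_finite_criticalOrbit {R Γ₀ : Type*} [Ring R]
    [LinearOrderedCommGroupWithZero Γ₀] (v : Valuation R Γ₀) {c : R}
    (hfin : (criticalOrbit c).Finite) : v c ≤ 1 := by
  by_contra! hc
  refine criticalOrbit_infinite_of_forall_lt v (fun x hx => ?_) hfin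
  have lt_sq : v x < v (x ^ 2) := by
    rw [map_pow]
    exact lt_self_pow₀ (hc.trans_le hx) one_lt_two
  rwa [v.map_add_eq_of_lt_left (hx.trans_lt lt_sq)]

theorem isIntegral_of_forall_mem_valuationSubring {A K : Type*} [CommRing A] [Field K] [Algebra A K]
    {x : K} (h : ∀ V : ValuationSubring K, (algebraMap A K).range ≤ V.toSubring → x ∈ V) :
    IsIntegral A x := by
  by_contra hx
  have : IsIntegrallyClosedIn (integralClosure A K).toSubring K :=
    inferInstanceAs (IsIntegrallyClosedIn (integralClosure A K) K)
  obtain ⟨V, hV, hxV⟩ := Subring.exists_le_valuationSubring_of_isIntegrallyClosedIn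
    (R := (integralClosure A K).toSubring) hx
  refine hxV (h V ?_)
  rintro _ ⟨a, rfl⟩
  exact hV (algebraMap_mem (integralClosure A K) a)

theorem isIntegral_of_finite_criticalOrbit {K : Type*} [Field K] {c : K}
    (hfin : (criticalOrbit c).Finite) : IsIntegral ℤ c :=
  isIntegral_of_forall_mem_valuationSubring fun V _ =>
    (V.valuation_le_one_iff c).mp (valuation_le_one_of_finite_criticalOrbit V.valuation hfin)

theorem absoluteValue_le_two_of_finite_criticalOrbit {R S : Type*} [Ring R] [CommRing S]
    [LinearOrder S] [IsStrictOrderedRing S] (v : AbsoluteValue R S) {c : R}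
    (hfin : (criticalOrbit c).Finite) : v c ≤ 2 := by
  by_contra! hc
  refine criticalOrbit_infinite_of_forall_lt v (fun x hx => ?_) hfin
  calc v x < v x * v x - v x := by nlinarith
    _ ≤ v (x ^ 2) - v c := by rw [sq, v.map_mul]; gcongr
    _ ≤ v (x ^ 2 + c) := v.le_add _ _

theorem four_mul_le_one_of_finite_criticalOrbit {R : Type*} [CommRing R] [LinearOrder R]
    [IsStrictOrderedRing R] {c : R} (hfin : (criticalOrbit c).Finite) : 4 * c ≤ 1 := by
  by_contra! hc
  refine criticalOrbit_infinite_of_forall_lt id (fun x _ => ?_) hfin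
  change x < x ^ 2 + c
  linarith [sq_nonneg (2 * x - 1)]

/-- If `c ∈ ℚ` and the critical orbit of `f(z) = z² + c` (the forward
orbit of `0`) is finite, then `c ∈ {0, -1, -2}`. -/
theorem rational_pcf_quadratic (c : ℚ)
    (hfin : (Set.range fun n : ℕ => (fun z : ℚ => z ^ 2 + c)^[n] 0).Finite) :
    c = 0 ∨ c = -1 ∨ c = -2 := by
  change (criticalOrbit c).Finite at hfin
  obtain ⟨m, rfl⟩ := IsIntegrallyClosed.isIntegral_iff.mp (isIntegral_of_finite_criticalOrbit hfin)
  rw [eq_intCast] at hfin ⊢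
  have hlower := neg_le_of_abs_le
    (absoluteValue_le_two_of_finite_criticalOrbit AbsoluteValue.abs hfin)
  have hupper := four_mul_le_one_of_finite_criticalOrbit hfin
  norm_cast at hlower hupper ⊢
  omega

end PCF
end

section
/- Let c ∈ ℂ and let f(z) = z² + c. If the forward orbit {f^n(0) : n ≥ 0} of the critical point 0 is finite, then c is an algebraic integer, i.e. c is a root of a monic polynomial with integer coefficients. -/
/-!
Let `f(z) = g(z) + c` with `g` monic of degree `d ≥ 2`. As a function of the parameter `c`, the
iterate `fⁿ⁺¹(a)` is a monic polynomial of degree `d ^ n`. A finite orbit has a coincidence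
`fᵐ(a) = fⁿ(a)` with `m < n`, so `c` is a root of the difference of two such polynomials, which is
monic because their degrees differ.
-/

namespace PCF

open Polynomial

section ParamOrbit

variable {R A : Type*} [CommRing R] [Ring A] [Algebra R A] {g : R[X]}

/-- The `n`-th point of the orbit of `a` under `z ↦ g(z) + c`, as a polynomial in the parameter `c`,
which is represented by the variable `X`. -/
noncomputable def paramOrbit (g : R[X]) (a : R) (n : ℕ) : R[X] :=
  (fun p => g.comp p + X)^[n] (C a)

theorem paramOrbit_zero (g : R[X]) (a : R) : paramOrbit g a 0 = C a := rfl

theorem paramOrbit_succ (g : R[X]) (a : R) (n : ℕ) :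
    paramOrbit g a (n + 1) = g.comp (paramOrbit g a n) + X :=
  Function.iterate_succ_apply' ..

theorem aeval_paramOrbit (g : R[X]) (a : R) (c : A) (n : ℕ) :
    aeval c (paramOrbit g a n) = (fun z : A => aeval z g + c)^[n] (algebraMap R A a) := by
  have hsemiconj : Function.Semiconj (aeval c) (fun p : R[X] => g.comp p + X)
      (fun z : A => aeval z g + c) := fun p => by
    rw [map_add, aeval_comp, aeval_X]
  rw [paramOrbit, (hsemiconj.iterate_right n).eq, aeval_C]

theorem isMonicOfDegree_paramOrbit_succ (hg : g.Monic) (hd : 1 < g.natDegree) (a : R) (n : ℕ) :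
    IsMonicOfDegree (paramOrbit g a (n + 1)) (g.natDegree ^ n) := by
  have : Nontrivial R := by
    by_contra! hsub
    simp [natDegree_of_subsingleton] at hd
  induction n with
  | zero =>
    rw [paramOrbit_succ, paramOrbit_zero, comp_C, add_comm, pow_zero]
    exact isMonicOfDegree_X_add_one _
  | succ n ih =>
    have hcomp : IsMonicOfDegree (g.comp (paramOrbit g a (n + 1))) (g.natDegree ^ (n + 1)) := by
      rw [pow_succ']
      exact .comp (pow_pos (zero_lt_one.trans hd) n).ne' ⟨rfl, hg⟩ ih
    rw [paramOrbit_succ]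
    exact hcomp.add_right (natDegree_X_le.trans_lt (Nat.one_lt_pow n.succ_ne_zero hd))

theorem strictMono_natDegree_paramOrbit (hg : g.Monic) (hd : 1 < g.natDegree) (a : R) :
    StrictMono fun n => (paramOrbit g a n).natDegree := by
  refine strictMono_nat_of_lt_succ fun n => ?_
  rw [(isMonicOfDegree_paramOrbit_succ hg hd a n).natDegree_eq]
  cases n with
  | zero => simp [paramOrbit_zero]
  | succ n =>
    rw [(isMonicOfDegree_paramOrbit_succ hg hd a n).natDegree_eq]
    exact Nat.pow_lt_pow_succ hd

theorem monic_paramOrbit_sub (hg : g.Monic) (hd : 1 < g.natDegree) (a : R) {m n : ℕ}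
    (hmn : m < n) : (paramOrbit g a n - paramOrbit g a m).Monic := by
  have hmonic : (paramOrbit g a n).Monic := by
    obtain ⟨k, rfl⟩ := Nat.exists_eq_add_one_of_ne_zero (Nat.ne_zero_of_lt hmn)
    exact (isMonicOfDegree_paramOrbit_succ hg hd a k).monic
  exact hmonic.sub_of_left (degree_lt_degree (strictMono_natDegree_paramOrbit hg hd a hmn))

theorem pcf_quadratic_integral_general (hg : g.Monic) (hd : 1 < g.natDegree) (a : R) (c : A)
    (hfin : (Set.range fun n : ℕ =>
      (fun z : A => aeval z g + c)^[n] (algebraMap R A a)).Finite) :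
    IsIntegral R c := by
  obtain ⟨m, n, hmn, heq⟩ := hfin.exists_lt_map_eq_of_forall_mem Set.mem_range_self
  refine ⟨paramOrbit g a n - paramOrbit g a m, monic_paramOrbit_sub hg hd a hmn, ?_⟩
  rw [← aeval_def, map_sub, aeval_paramOrbit, aeval_paramOrbit, sub_eq_zero]
  exact heq.symm

end ParamOrbit

/-- If `c ∈ ℂ` and the critical orbit of `f(z) = z² + c` (the forward
orbit of `0`) is finite, then `c` is an algebraic integer. -/
theorem pcf_quadratic_integral (c : ℂ)
    (hfin : (Set.range fun n : ℕ => (fun z : ℂ => z ^ 2 + c)^[n] 0).Finite) :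
    IsIntegral ℤ c :=
  pcf_quadratic_integral_general (g := X ^ 2) (monic_X_pow 2) (by simp) 0 c (by simpa using hfin)

end PCF
end
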